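/- arXiv:0809.0105 — 2 statements merged into one kernel-verified Lean document; each statement's English description precedes it below -/
import Mathlib

section
/- Let (S, σ, s₀) and (T, τ, t₀) be segments with end-points z and z' respectively. On the disjoint union R = S ⊕ T define ρ : R → R by ρ(inl s) = inl(σ(s)) for s ∈ S with s ≠ z, ρ(inl z) = inr(t₀), and ρ(inr t) = inr(τ(t)) for t ∈ T. Then (R, ρ, inl s₀) is a segment with end-point inr z'. -/
/-!
Minimality up to `z` is an induction principle whose step is only required at points other
than `z`. To show that a property holds on the whole join, induct on the first segment, whose
step avoids exactly the point where `ρ` has been redirected. The property then holds at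
`inl z`, hence at `ρ (inl z) = inr t₀`, which is the base case for an induction on the second
segment.
-/

section CountingSystem

variable {X : Type*} {f : X → X} {x₀ z : X}

/-- Minimality of the counting system `(X, f, x₀)`: the only `f`-invariant subset of `X`
containing `x₀` is `X` itself. -/
def IsMinimalSystem (f : X → X) (x₀ : X) : Prop :=
  ∀ Y : Set X, x₀ ∈ Y → (∀ x ∈ Y, f x ∈ Y) → Y = Set.univ

/-- `z`-minimality of the counting system `(X, f, x₀)`: the only subset of `X` containing `x₀`
and closed under `f` away from `z` is `X` itself. For a finite minimal system, this is the
condition that defines its end-point `z`. -/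
def IsMinimalUpTo (f : X → X) (x₀ z : X) : Prop :=
  ∀ Y : Set X, x₀ ∈ Y → (∀ x ∈ Y \ ({z} : Set X), f x ∈ Y) → Y = Set.univ

theorem IsMinimalUpTo.isMinimalSystem (h : IsMinimalUpTo f x₀ z) : IsMinimalSystem f x₀ :=
  fun Y hx₀ hY => h Y hx₀ fun x hx => hY x hx.1

theorem IsMinimalUpTo.induction {p : X → Prop} (h : IsMinimalUpTo f x₀ z) (base : p x₀)
    (step : ∀ x, x ≠ z → p x → p (f x)) (x : X) : p x :=
  Set.eq_univ_iff_forall.mp (h {x | p x} base fun x hx => step x hx.2 hx.1) x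

end CountingSystem

section Join

variable {S T : Type*} {σ : S → S} {s₀ z : S} {τ : T → T} {t₀ z' : T} {ρ : S ⊕ T → S ⊕ T}

theorem IsMinimalUpTo.join (hS : IsMinimalUpTo σ s₀ z) (hT : IsMinimalUpTo τ t₀ z')
    (hρ_inl : ∀ s, s ≠ z → ρ (Sum.inl s) = Sum.inl (σ s))
    (hρ_end : ρ (Sum.inl z) = Sum.inr t₀)
    (hρ_inr : ∀ t, t ≠ z' → ρ (Sum.inr t) = Sum.inr (τ t)) :
    IsMinimalUpTo ρ (Sum.inl s₀) (Sum.inr z') := by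
  intro Y hs₀ hY
  have inl_mem : ∀ s, Sum.inl s ∈ Y := hS.induction hs₀ fun s hsz hs =>
    hρ_inl s hsz ▸ hY (Sum.inl s) ⟨hs, Sum.inl_ne_inr⟩
  have inr_start_mem : Sum.inr t₀ ∈ Y :=
    hρ_end ▸ hY (Sum.inl z) ⟨inl_mem z, Sum.inl_ne_inr⟩
  have inr_mem : ∀ t, Sum.inr t ∈ Y := hT.induction inr_start_mem fun t htz ht =>
    hρ_inr t htz ▸ hY (Sum.inr t) ⟨ht, Sum.inr_injective.ne htz⟩
  exact Set.eq_univ_iff_forall.mpr (Sum.rec inl_mem inr_mem)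

theorem segment_join_general (hS : IsMinimalUpTo σ s₀ z) (hT : IsMinimalUpTo τ t₀ z')
    (hz' : τ z' = z')
    (hρ_inl : ∀ s, s ≠ z → ρ (Sum.inl s) = Sum.inl (σ s))
    (hρ_end : ρ (Sum.inl z) = Sum.inr t₀)
    (hρ_inr : ∀ t, ρ (Sum.inr t) = Sum.inr (τ t)) :
    IsMinimalSystem ρ (Sum.inl s₀) ∧ IsMinimalUpTo ρ (Sum.inl s₀) (Sum.inr z') ∧
      ρ (Sum.inr z') = Sum.inr z' := by
  have join_minimal : IsMinimalUpTo ρ (Sum.inl s₀) (Sum.inr z') :=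
    hS.join hT hρ_inl hρ_end fun t _ => hρ_inr t
  exact ⟨join_minimal.isMinimalSystem, join_minimal, by rw [hρ_inr, hz']⟩

end Join

/-- Joining two segments: given segments `(S, σ, s₀)` with end-point `z` and
`(T, τ, t₀)` with end-point `z'`, define `ρ` on the disjoint union `S ⊕ T` by
`ρ (inl s) = inl (σ s)` for `s ≠ z`, `ρ (inl z) = inr t₀`, and
`ρ (inr t) = inr (τ t)`. Then `(S ⊕ T, ρ, inl s₀)` is a segment with end-point
`inr z'`: it is minimal, it is `inr z'`-minimal, and `inr z'` is a fixed point of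
`ρ`. -/
theorem segment_join {S : Type*} [Finite S] (σ : S → S) (s₀ : S)
    (hSmin : ∀ Y : Set S, s₀ ∈ Y → (∀ x ∈ Y, σ x ∈ Y) → Y = Set.univ)
    (z : S)
    (hSz : ∀ Y : Set S, s₀ ∈ Y → (∀ x ∈ Y \ ({z} : Set S), σ x ∈ Y) → Y = Set.univ)
    (hzfix : σ z = z)
    {T : Type*} [Finite T] (τ : T → T) (t₀ : T)
    (hTmin : ∀ Y : Set T, t₀ ∈ Y → (∀ x ∈ Y, τ x ∈ Y) → Y = Set.univ)
    (z' : T)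
    (hTz : ∀ Y : Set T, t₀ ∈ Y → (∀ x ∈ Y \ ({z'} : Set T), τ x ∈ Y) → Y = Set.univ)
    (hz'fix : τ z' = z')
    (ρ : S ⊕ T → S ⊕ T)
    (hρ₁ : ∀ s : S, s ≠ z → ρ (Sum.inl s) = Sum.inl (σ s))
    (hρ₂ : ρ (Sum.inl z) = Sum.inr t₀)
    (hρ₃ : ∀ t : T, ρ (Sum.inr t) = Sum.inr (τ t)) :
    (∀ Y : Set (S ⊕ T), Sum.inl s₀ ∈ Y → (∀ x ∈ Y, ρ x ∈ Y) → Y = Set.univ) ∧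
      (∀ Y : Set (S ⊕ T), Sum.inl s₀ ∈ Y →
        (∀ x ∈ Y \ ({Sum.inr z'} : Set (S ⊕ T)), ρ x ∈ Y) → Y = Set.univ) ∧
      ρ (Sum.inr z') = Sum.inr z' :=
  segment_join_general hSz hTz hz'fix hρ₁ hρ₂ hρ₃
end

section
/- Let (X, f, x₀) be a minimal counting system, α an infinite type, and # the unique iterator for (X, f, x₀) on α. Then there exists a unique binary operation ⊕ on X satisfying (a0) x ⊕ x₀ = x for all x ∈ X and (a1) x ⊕ f(x') = f(x ⊕ x') for all x, x' ∈ X. This operation is associative and commutative, satisfies #(A) ⊕ #(B) = #(A ∪ B) whenever A, B : Finset α are disjoint, and for all x₁, x₂ ∈ X there exists x ∈ X with either x₁ = x₂ ⊕ x or x₂ = x₁ ⊕ x. Moreover, ⊕ is the unique binary operation on X satisfying #(A) ⊕ #(B) = #(A ∪ B) for all disjoint A, B : Finset α. -/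
/-!
By minimality every element of `X` has the form `f^[n] x₀`, and the iterator is
`A ↦ f^[A.card] x₀`. The recursion forces `x ⊕ f^[n] x₀ = f^[n] x`, so
`f^[m] x₀ ⊕ f^[n] x₀ = f^[m + n] x₀`, and the algebraic claims are inherited from `ℕ`.
For existence, this formula is taken as the definition of `⊕`; it does not depend on the `n`
chosen to represent `f^[n] x₀`, because iterates of `f` commute and so are determined by their
value at `x₀`.
The characterization by disjoint unions holds because any two elements of `X` are values of the
iterator at disjoint sets.
-/

section CountingSystem

open Function

variable {X α : Type*} {f : X → X} {x₀ : X} {op op' : X → X → X}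

/-- The counting system `(X, f, x₀)` is minimal: no proper `f`-invariant subset contains `x₀`. -/
def IsMinimalCountingSystem (f : X → X) (x₀ : X) : Prop :=
  ∀ S : Set X, x₀ ∈ S → (∀ x ∈ S, f x ∈ S) → S = Set.univ

/-- `op` is an addition on the counting system `(X, f, x₀)`: it satisfies the recursion (a0), (a1)
in its second argument. -/
structure IsCountingAddition (f : X → X) (x₀ : X) (op : X → X → X) : Prop where
  apply_base : ∀ x, op x x₀ = x
  apply_succ : ∀ x x', op x (f x') = f (op x x')

/-- `it` is an iterator for the counting system `(X, f, x₀)` on `α`: it counts the elements of a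
finite set by applying `f` once for each of them. -/
structure IsCountingIterator [DecidableEq α] (f : X → X) (x₀ : X) (it : Finset α → X) : Prop where
  empty : it ∅ = x₀
  insert : ∀ (A : Finset α) (a : α), a ∉ A → it (insert a A) = f (it A)

namespace IsMinimalCountingSystem

theorem iterate_surjective (hmin : IsMinimalCountingSystem f x₀) :
    Surjective fun n : ℕ => f^[n] x₀ := by
  refine Set.range_eq_univ.mp (hmin _ ⟨0, rfl⟩ ?_)
  rintro _ ⟨n, rfl⟩
  exact ⟨n + 1, iterate_succ_apply' f n x₀⟩

theorem iterate_eq_iterate (hmin : IsMinimalCountingSystem f x₀) {m n : ℕ}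
    (h : f^[m] x₀ = f^[n] x₀) : f^[m] = f^[n] := by
  funext x
  obtain ⟨k, rfl⟩ := hmin.iterate_surjective x
  calc f^[m] (f^[k] x₀) = f^[k] (f^[m] x₀) := Commute.iterate_iterate_self f m k x₀
    _ = f^[k] (f^[n] x₀) := by rw [h]
    _ = f^[n] (f^[k] x₀) := Commute.iterate_iterate_self f k n x₀

/-- The addition `x ⊕ f^[n] x₀ = f^[n] x` of a minimal counting system, where `n` is chosen
arbitrarily among the representations `f^[n] x₀` of the second summand. -/
noncomputable def add (hmin : IsMinimalCountingSystem f x₀) (x y : X) : X :=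
  f^[surjInv hmin.iterate_surjective y] x

theorem add_iterate (hmin : IsMinimalCountingSystem f x₀) (x : X) (n : ℕ) :
    hmin.add x (f^[n] x₀) = f^[n] x :=
  congrFun (hmin.iterate_eq_iterate (surjInv_eq hmin.iterate_surjective (f^[n] x₀))) x

theorem isCountingAddition_add (hmin : IsMinimalCountingSystem f x₀) :
    IsCountingAddition f x₀ hmin.add where
  apply_base x := hmin.add_iterate x 0
  apply_succ x x' := by
    obtain ⟨n, rfl⟩ := hmin.iterate_surjective x'
    simp only [← iterate_succ_apply', add_iterate]

end IsMinimalCountingSystem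

namespace IsCountingAddition

theorem apply_iterate (hop : IsCountingAddition f x₀ op) (x y : X) (n : ℕ) :
    op x (f^[n] y) = f^[n] (op x y) :=
  Semiconj.iterate_right (hop.apply_succ x) n y

theorem apply_iterate_base (hop : IsCountingAddition f x₀ op) (x : X) (n : ℕ) :
    op x (f^[n] x₀) = f^[n] x := by
  rw [hop.apply_iterate, hop.apply_base]

theorem iterate_iterate (hop : IsCountingAddition f x₀ op) (m n : ℕ) :
    op (f^[m] x₀) (f^[n] x₀) = f^[m + n] x₀ := by
  rw [hop.apply_iterate_base, Nat.add_comm, iterate_add_apply]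

theorem unique (hop : IsCountingAddition f x₀ op) (hmin : IsMinimalCountingSystem f x₀)
    (hop' : IsCountingAddition f x₀ op') : op = op' := by
  funext x y
  obtain ⟨n, rfl⟩ := hmin.iterate_surjective y
  exact (hop.apply_iterate_base x n).trans (hop'.apply_iterate_base x n).symm

theorem assoc (hop : IsCountingAddition f x₀ op) (hmin : IsMinimalCountingSystem f x₀)
    (x y z : X) : op (op x y) z = op x (op y z) := by
  obtain ⟨n, rfl⟩ := hmin.iterate_surjective z
  simp only [hop.apply_iterate_base, hop.apply_iterate]

theorem comm (hop : IsCountingAddition f x₀ op) (hmin : IsMinimalCountingSystem f x₀)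
    (x y : X) : op x y = op y x := by
  obtain ⟨m, rfl⟩ := hmin.iterate_surjective x
  obtain ⟨n, rfl⟩ := hmin.iterate_surjective y
  simp only [hop.iterate_iterate, Nat.add_comm]

theorem exists_eq_or_eq (hop : IsCountingAddition f x₀ op) (hmin : IsMinimalCountingSystem f x₀)
    (x y : X) : ∃ z, x = op y z ∨ y = op x z := by
  obtain ⟨m, rfl⟩ := hmin.iterate_surjective x
  obtain ⟨n, rfl⟩ := hmin.iterate_surjective y
  rcases Nat.le_total n m with hnm | hmn
  · obtain ⟨k, rfl⟩ := Nat.exists_eq_add_of_le hnm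
    exact ⟨f^[k] x₀, Or.inl (hop.iterate_iterate n k).symm⟩
  · obtain ⟨k, rfl⟩ := Nat.exists_eq_add_of_le hmn
    exact ⟨f^[k] x₀, Or.inr (hop.iterate_iterate m k).symm⟩

end IsCountingAddition

theorem exists_finset_disjoint_card_eq [Infinite α] (A : Finset α) (n : ℕ) :
    ∃ B : Finset α, Disjoint A B ∧ B.card = n := by
  obtain ⟨B, hBA, hB⟩ := A.finite_toSet.infinite_compl.exists_subset_card_eq n
  exact ⟨B, Finset.disjoint_coe.mp (Set.disjoint_left.mpr fun _ hA hB => hBA hB hA), hB⟩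

namespace IsCountingIterator

variable [DecidableEq α] {it : Finset α → X}

theorem eq_iterate_card (hit : IsCountingIterator f x₀ it) (A : Finset α) :
    it A = f^[A.card] x₀ := by
  induction A using Finset.induction_on with
  | empty => exact hit.empty
  | insert a A ha ih =>
    rw [hit.insert A a ha, ih, Finset.card_insert_of_notMem ha, iterate_succ_apply']

theorem op_eq_union (hit : IsCountingIterator f x₀ it) (hop : IsCountingAddition f x₀ op)
    {A B : Finset α} (hAB : Disjoint A B) : op (it A) (it B) = it (A ∪ B) := by
  simp only [hit.eq_iterate_card, hop.iterate_iterate, Finset.card_union_of_disjoint hAB]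

theorem exists_disjoint_eq [Infinite α] (hit : IsCountingIterator f x₀ it)
    (hmin : IsMinimalCountingSystem f x₀) (x y : X) :
    ∃ A B : Finset α, Disjoint A B ∧ it A = x ∧ it B = y := by
  obtain ⟨m, rfl⟩ := hmin.iterate_surjective x
  obtain ⟨n, rfl⟩ := hmin.iterate_surjective y
  obtain ⟨A, rfl⟩ := Infinite.exists_subset_card_eq α m
  obtain ⟨B, hAB, rfl⟩ := exists_finset_disjoint_card_eq A n
  exact ⟨A, B, hAB, hit.eq_iterate_card A, hit.eq_iterate_card B⟩

theorem op_ext [Infinite α] (hit : IsCountingIterator f x₀ it)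
    (hmin : IsMinimalCountingSystem f x₀)
    (h : ∀ A B : Finset α, Disjoint A B → op (it A) (it B) = op' (it A) (it B)) : op = op' := by
  funext x y
  obtain ⟨A, B, hAB, rfl, rfl⟩ := hit.exists_disjoint_eq hmin x y
  exact h A B hAB

end IsCountingIterator

end CountingSystem

/-- Addition for a minimal counting system `(X, f, x₀)` with unique iterator `it` on an
infinite type `α`: there is a unique binary operation `⊕` on `X` with `x ⊕ x₀ = x` and
`x ⊕ f x' = f (x ⊕ x')`; it is associative, commutative, satisfies
`it A ⊕ it B = it (A ∪ B)` for disjoint `A, B`, any two elements are comparable by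
addition, and it is the unique operation satisfying `it A ⊕ it B = it (A ∪ B)` for all
disjoint `A, B`. -/
theorem minimal_addition {X : Type*} (f : X → X) (x₀ : X)
    (hmin : ∀ S : Set X, x₀ ∈ S → (∀ x ∈ S, f x ∈ S) → S = Set.univ)
    {α : Type*} [DecidableEq α] [Infinite α] (it : Finset α → X)
    (h0 : it ∅ = x₀)
    (h1 : ∀ (A : Finset α) (a : α), a ∉ A → it (insert a A) = f (it A)) :
    (∃! op : X → X → X,
      (∀ x : X, op x x₀ = x) ∧ (∀ x x' : X, op x (f x') = f (op x x'))) ∧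
      ∀ op : X → X → X,
        ((∀ x : X, op x x₀ = x) ∧ (∀ x x' : X, op x (f x') = f (op x x'))) →
        (∀ x y zz : X, op (op x y) zz = op x (op y zz)) ∧
        (∀ x y : X, op x y = op y x) ∧
        (∀ A B : Finset α, Disjoint A B → op (it A) (it B) = it (A ∪ B)) ∧
        (∀ x₁ x₂ : X, ∃ x : X, x₁ = op x₂ x ∨ x₂ = op x₁ x) ∧
        (∀ op' : X → X → X,
          (∀ A B : Finset α, Disjoint A B → op' (it A) (it B) = it (A ∪ B)) →
          op' = op) := by
  have hsys : IsMinimalCountingSystem f x₀ := hmin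
  have hit : IsCountingIterator f x₀ it := ⟨h0, h1⟩
  have hadd := hsys.isCountingAddition_add
  refine ⟨⟨hsys.add, ⟨hadd.apply_base, hadd.apply_succ⟩, ?_⟩, ?_⟩
  · rintro op ⟨a0, a1⟩
    exact IsCountingAddition.unique ⟨a0, a1⟩ hsys hadd
  · rintro op ⟨a0, a1⟩
    have hop : IsCountingAddition f x₀ op := ⟨a0, a1⟩
    refine ⟨hop.assoc hsys, hop.comm hsys, fun _ _ => hit.op_eq_union hop,
      hop.exists_eq_or_eq hsys, fun op' hop' => hit.op_ext hsys fun A B hAB => ?_⟩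
    rw [hop' A B hAB, hit.op_eq_union hop hAB]
end
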